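/- (Theorem: joint error identity.) Assume the nonlinear DWR setting below, with continuous primal solution u, continuous adjoint solution z, discrete primal solution u_kh ∈ X_h and discrete adjoint solution z_kh ∈ X_h. Then J(u) − J(u_kh) = (1/2)·ρ(u_kh)(z − z_kh) + (1/2)·ρ*(u_kh, z_kh)(u − u_kh) + R_kh, where the remainder is R_kh := (1/2)·∫₀¹ D³L((u_kh,z_kh) + s·e)(e,e,e)·s·(s−1) ds with e := (u,z) − (u_kh,z_kh) in X × X and D³L the third Fréchet derivative of the Lagrangian L. -/

import Mathlib

/-!
Both solution pairs make the constraint term of the Lagrangian vanish, so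
`J u - J ukh = L (u, z) - L (ukh, zkh)`. Along the segment `g s = L ((ukh, zkh) + s • e)` the
trapezoidal rule with integral remainder (`trapezoid_segment`) reads
`g 1 - g 0 = (g' 0 + g' 1) / 2 + (1 / 2) * ∫₀¹ g''' s * s * (s - 1)`. By
`fderiv_lagrangian_apply`, the derivative of `L` is the sum of the adjoint and primal residuals:
hence `g' 1 = 0` by stationarity at `(u, z)`, and `g' 0` gives the two residual terms.
-/

/-- Differentiating the `k`-th directional derivative along a line gives the `(k+1)`-st. -/
lemma hasDerivAt_iteratedFDeriv_line {E : Type*} [NormedAddCommGroup E] [NormedSpace ℝ E]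
    {f : E → ℝ} {n k : ℕ} (hf : ContDiff ℝ n f) (hk : k < n) (x e : E) (s : ℝ) :
    HasDerivAt (fun s : ℝ => iteratedFDeriv ℝ k f (x + s • e) (fun _ => e))
      (iteratedFDeriv ℝ (k + 1) f (x + s • e) (fun _ => e)) s := by
  have hline : HasDerivAt (fun s : ℝ => x + s • e) e s := by
    simpa using ((hasDerivAt_id s).smul_const e).const_add x
  have hd : DifferentiableAt ℝ (iteratedFDeriv ℝ k f) (x + s • e) :=
    (hf.differentiable_iteratedFDeriv (by exact_mod_cast hk)) _
  have h1 := hd.hasFDerivAt.comp_hasDerivAt s hline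
  have h2 := (ContinuousMultilinearMap.apply ℝ (fun _ : Fin k => E) ℝ
    (fun _ => e)).hasFDerivAt.comp_hasDerivAt s h1
  exact h2

/-- The trapezoidal rule on a segment with integral remainder. -/
lemma trapezoid_segment {E : Type*} [NormedAddCommGroup E] [NormedSpace ℝ E]
    {f : E → ℝ} (hf : ContDiff ℝ 3 f) (x e : E) :
    f (x + e) - f x = (1 / 2) * fderiv ℝ f x e + (1 / 2) * fderiv ℝ f (x + e) e
      + (1 / 2) * ∫ s in (0 : ℝ)..1,
          (iteratedFDeriv ℝ 3 f (x + s • e) (fun _ => e)) * s * (s - 1) := by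
  have hd := fun k (hk : k < 3) s =>
    hasDerivAt_iteratedFDeriv_line (n := 3) (by exact_mod_cast hf) hk x e s
  -- This antiderivative comes from integrating by parts twice.
  have hprim : ∀ s : ℝ, HasDerivAt (fun s : ℝ =>
      iteratedFDeriv ℝ 2 f (x + s • e) (fun _ => e) * (s * (s - 1))
      - iteratedFDeriv ℝ 1 f (x + s • e) (fun _ => e) * (2 * s - 1)
      + 2 * iteratedFDeriv ℝ 0 f (x + s • e) (fun _ => e))
      ((iteratedFDeriv ℝ 3 f (x + s • e) (fun _ => e)) * s * (s - 1)) s := by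
    intro s
    have hid := hasDerivAt_id' s
    have h := (((hd 2 (by norm_num) s).mul (hid.mul (hid.sub_const 1))).sub
      ((hd 1 (by norm_num) s).mul ((hid.const_mul 2).sub_const 1))).add
      ((hd 0 (by norm_num) s).const_mul 2)
    refine h.congr_deriv ?_
    simp only [Nat.reduceAdd, Pi.mul_apply]
    ring
  have hcont : Continuous (fun s : ℝ =>
      (iteratedFDeriv ℝ 3 f (x + s • e) (fun _ => e)) * s * (s - 1)) := by
    have h3 : Continuous (iteratedFDeriv ℝ 3 f) :=
      hf.continuous_iteratedFDeriv (by norm_num)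
    have h3' : Continuous (fun s : ℝ => iteratedFDeriv ℝ 3 f (x + s • e) (fun _ => e)) :=
      (ContinuousMultilinearMap.apply ℝ (fun _ : Fin 3 => E) ℝ (fun _ => e)).continuous.comp
        (h3.comp (by fun_prop))
    fun_prop
  rw [intervalIntegral.integral_eq_sub_of_hasDerivAt (fun s _ => hprim s)
    (hcont.intervalIntegrable 0 1)]
  simp only [iteratedFDeriv_one_apply, iteratedFDeriv_zero_apply, one_smul, zero_smul, add_zero]
  ring

/-- The derivative of the Lagrangian is the adjoint residual plus the primal residual. The
functional `J` and the maps `v ↦ A v w` inherit differentiability from `L`, because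
`L (v, 0) = J v`. -/
lemma fderiv_lagrangian_apply {X : Type*} [NormedAddCommGroup X] [NormedSpace ℝ X]
    {F : X →L[ℝ] ℝ} {J : X → ℝ} {A : X → X →L[ℝ] ℝ} {L : X × X → ℝ}
    (hLdef : ∀ v w : X, L (v, w) = J v - A v w + F w) (hL : Differentiable ℝ L)
    (v w a b : X) :
    fderiv ℝ L (v, w) (a, b)
      = (fderiv ℝ J v a - fderiv ℝ (fun v => A v w) v a) + (F b - A v b) := by
  have hJ : Differentiable ℝ J := by
    have : J = fun v => L (v, 0) := by
      funext v
      simp [hLdef]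
    rw [this]
    fun_prop
  have hA : Differentiable ℝ (fun v => A v w) := by
    have : (fun v => A v w) = fun v => J v + F w - L (v, w) := by
      funext v
      rw [hLdef]
      ring
    rw [this]
    fun_prop
  have hD := (hL (v, w)).hasFDerivAt
  have h1 : fderiv ℝ L (v, w) (a, 0) = fderiv ℝ J v a - fderiv ℝ (fun v => A v w) v a := by
    have hc := HasFDerivAt.comp (f := fun v => (v, w)) v hD (hasFDerivAt_prodMk_left (𝕜 := ℝ) v w)
    have hc' : HasFDerivAt (fun v => L (v, w))
        (fderiv ℝ J v - fderiv ℝ (fun v => A v w) v) v := by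
      simp only [hLdef]
      exact ((hJ v).hasFDerivAt.sub (hA v).hasFDerivAt).add_const _
    simpa using DFunLike.congr_fun (hc.unique hc') a
  have h2 : fderiv ℝ L (v, w) (0, b) = F b - A v b := by
    have hc := HasFDerivAt.comp (f := fun w => (v, w)) w hD (hasFDerivAt_prodMk_right (𝕜 := ℝ) v w)
    have hc' : HasFDerivAt (fun w => L (v, w)) (-A v + F) w := by
      simp only [hLdef]
      exact ((A v).hasFDerivAt.const_sub (J v)).add F.hasFDerivAt
    have := DFunLike.congr_fun (hc.unique hc') b
    simp at this
    linarith
  have hab : (a, b) = ((a, 0) : X × X) + (0, b) := by simp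
  rw [hab, map_add, h1, h2]

/-- Joint error identity of the dual-weighted residual method (nonlinear setting):
`J(u) − J(u_kh) = ½·ρ(u_kh)(z − z_kh) + ½·ρ*(u_kh,z_kh)(u − u_kh) + R_kh`, where the
remainder is `R_kh = ½·∫₀¹ D³L((u_kh,z_kh) + s·e)(e,e,e)·s·(s−1) ds` with
`e = (u,z) − (u_kh,z_kh)` and `L(v,w) = J(v) − A(v,w) + F(w)` the Lagrangian. -/
theorem joint_error_identity
    {X : Type*} [NormedAddCommGroup X] [NormedSpace ℝ X]
    (Xh : Submodule ℝ X)
    (F : X →L[ℝ] ℝ) (J : X → ℝ) (A : X → X →L[ℝ] ℝ)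
    (L : X × X → ℝ) (hLdef : ∀ v w : X, L (v, w) = J v - A v w + F w)
    (hL : ContDiff ℝ 3 L)
    (u z ukh zkh : X)
    (hu : ∀ φ : X, A u φ = F φ)
    (hz : ∀ ψ : X, fderiv ℝ J u ψ = fderiv ℝ (fun v => A v z) u ψ)
    (hukh : ukh ∈ Xh) (hzkh : zkh ∈ Xh)
    (hukh_sol : ∀ φh ∈ Xh, A ukh φh = F φh)
    (hzkh_sol : ∀ ψh ∈ Xh, fderiv ℝ J ukh ψh = fderiv ℝ (fun v => A v zkh) ukh ψh)
    (e : X × X) (he : e = (u, z) - (ukh, zkh)) :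
    J u - J ukh
      = (1 / 2) * (F (z - zkh) - A ukh (z - zkh))
        + (1 / 2) * (fderiv ℝ J ukh (u - ukh)
            - fderiv ℝ (fun v => A v zkh) ukh (u - ukh))
        + (1 / 2) * ∫ s in (0 : ℝ)..1,
            (iteratedFDeriv ℝ 3 L ((ukh, zkh) + s • e) (fun _ => e)) * s * (s - 1) := by
  have hend : (ukh, zkh) + e = (u, z) := by
    rw [he]
    abel
  have he' : e = (u - ukh, z - zkh) := by simp [he]
  have hdiff : Differentiable ℝ L := hL.differentiable (by norm_num)
  have hT := trapezoid_segment hL (ukh, zkh) e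
  have h0 := fderiv_lagrangian_apply hLdef hdiff ukh zkh (u - ukh) (z - zkh)
  rw [← he'] at h0
  have h1 : fderiv ℝ L (u, z) e = 0 := by
    rw [he', fderiv_lagrangian_apply hLdef hdiff, hz, hu]
    ring
  rw [hend, h0, h1, hLdef, hLdef, hu, hukh_sol zkh hzkh] at hT
  linarith
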